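/- For every real x > 0, ₕe(x) = 1 + e^x (ln x + E₁(x) + γ), where E₁(x) = ∫_x^∞ e^{-t}/t dt and γ is the Euler–Mascheroni constant (Gosper's generating function of the harmonic numbers). -/

import Mathlib

open Real MeasureTheory

/-- The `n`-th harmonic number `h_n = ∑_{r=1}^n 1/r`. -/
noncomputable def harm (n : ℕ) : ℝ := ∑ r ∈ Finset.range n, 1 / (r + 1 : ℝ)

/-- The harmonic based exponential function `ₕe(x) = 1 + ∑_{n=1}^∞ h_n x^n / n!`. -/
noncomputable def he (x : ℝ) : ℝ :=
  1 + ∑' n : ℕ, harm (n + 1) * x ^ (n + 1) / (Nat.factorial (n + 1) : ℝ)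

/-!
Passing from a sequence to its forward difference is differentiation of `e⁻ˣ` times the exponential
generating function. For the harmonic numbers the difference is `1 / (n + 1)`, whose generating
function is `(eˣ - 1) / x`; hence `e⁻ˣ (ₕe x - 1)` is the entire exponential integral
`Ein x = ∫₀ˣ (1 - e⁻ᵗ) / t dt`. Integrating by parts against `log t` on `(0, x)` for `Ein` and on
`(x, ∞)` for `E₁` gives `Ein x - E₁ x = log x - ∫₀^∞ e⁻ᵗ log t dt`, and the last integral is
`-γ`, the derivative of the Gamma function at `1`.
-/

open Filter Set intervalIntegral
open scoped Nat Topology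

section ExponentialGeneratingFunction

variable {𝕜 : Type*} [RCLike 𝕜] {a : ℕ → 𝕜} {C r : ℝ}

/-- The exponential generating function `∑ aₙ xⁿ / n!` of a sequence, as a function on `𝕜`;
it has the junk value `0` at points where the series is not summable. -/
noncomputable def egf (a : ℕ → 𝕜) (x : 𝕜) : 𝕜 := ∑' n, a n * x ^ n / n !

theorem egf_zero (a : ℕ → 𝕜) : egf a 0 = a 0 := by
  rw [egf, tsum_eq_single 0 fun n hn => by simp [hn]]
  simp

theorem norm_mul_pow_div_factorial_le {c x : 𝕜} {R : ℝ} {n : ℕ} (hc : ‖c‖ ≤ C * r ^ n)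
    (hx : ‖x‖ ≤ R) : ‖c * x ^ n / (n !)‖ ≤ C * ((r * R) ^ n / n !) := by
  calc ‖c * x ^ n / (n !)‖ = ‖c‖ * ‖x‖ ^ n / n ! := by simp
    _ ≤ C * r ^ n * R ^ n / n ! := by
      have hnonneg := (norm_nonneg c).trans hc
      gcongr
    _ = C * ((r * R) ^ n / n !) := by rw [mul_pow]; ring

theorem summable_egf (ha : ∀ n, ‖a n‖ ≤ C * r ^ n) (x : 𝕜) :
    Summable fun n => a n * x ^ n / n ! :=
  .of_norm_bounded ((summable_pow_div_factorial (r * ‖x‖)).mul_left C)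
    fun n => norm_mul_pow_div_factorial_le (ha n) le_rfl

theorem egf_eq_add_tsum_succ (ha : ∀ n, ‖a n‖ ≤ C * r ^ n) (x : 𝕜) :
    egf a x = a 0 + ∑' n, a (n + 1) * x ^ (n + 1) / (n + 1)! := by
  simp [egf, (summable_egf ha x).tsum_eq_zero_add]

theorem norm_succ_le_mul_pow (ha : ∀ n, ‖a n‖ ≤ C * r ^ n) (n : ℕ) :
    ‖a (n + 1)‖ ≤ C * r * r ^ n :=
  (ha (n + 1)).trans_eq (by ring)

theorem hasDerivAt_mul_pow_succ_div_factorial (c x : 𝕜) (n : ℕ) :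
    HasDerivAt (fun y => c * y ^ (n + 1) / (n + 1)!) (c * x ^ n / n !) x := by
  refine (((hasDerivAt_pow (n + 1) x).const_mul c).div_const _).congr_deriv ?_
  have hn : (n : 𝕜) + 1 ≠ 0 := n.cast_add_one_ne_zero
  rw [Nat.factorial_succ]
  push_cast
  field_simp

theorem hasDerivAt_egf (ha : ∀ n, ‖a n‖ ≤ C * r ^ n) (x : 𝕜) :
    HasDerivAt (egf a) (egf (fun n => a (n + 1)) x) x := by
  have hx : x ∈ Metric.ball (0 : 𝕜) (‖x‖ + 1) := by simp
  have hsum : Summable fun n => C * r * ((r * (‖x‖ + 1)) ^ n / n !) :=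
    (summable_pow_div_factorial _).mul_left _
  have hbound (n : ℕ) (y : 𝕜) (hy : y ∈ Metric.ball 0 (‖x‖ + 1)) :
      ‖a (n + 1) * y ^ n / (n !)‖ ≤ C * r * ((r * (‖x‖ + 1)) ^ n / n !) :=
    norm_mul_pow_div_factorial_le (norm_succ_le_mul_pow ha n) (mem_ball_zero_iff.1 hy).le
  have hsum_x : Summable fun n => a (n + 1) * x ^ (n + 1) / (n + 1)! :=
    (summable_nat_add_iff (f := fun n => a n * x ^ n / n !) 1).2 (summable_egf ha x)
  have hderiv : HasDerivAt (fun y => ∑' n, a (n + 1) * y ^ (n + 1) / (n + 1)!)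
      (∑' n, a (n + 1) * x ^ n / n !) x :=
    hasDerivAt_tsum_of_isPreconnected hsum Metric.isOpen_ball Metric.isPreconnected_ball
      (fun n y _ => hasDerivAt_mul_pow_succ_div_factorial (a (n + 1)) y n) hbound hx hsum_x hx
  rw [funext (egf_eq_add_tsum_succ ha)]
  exact hderiv.const_add (a 0)

theorem egf_succ_sub (ha : ∀ n, ‖a n‖ ≤ C * r ^ n) (x : 𝕜) :
    egf (fun n => a (n + 1) - a n) x = egf (fun n => a (n + 1)) x - egf a x := by
  simp only [egf, sub_mul, sub_div]
  exact (summable_egf (norm_succ_le_mul_pow ha) x).tsum_sub (summable_egf ha x)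

theorem hasDerivAt_exp_neg_mul_egf (ha : ∀ n, ‖a n‖ ≤ C * r ^ n) (x : 𝕜) :
    HasDerivAt (fun y => NormedSpace.exp (-y) * egf a y)
      (NormedSpace.exp (-x) * egf (fun n => a (n + 1) - a n) x) x := by
  have hexp : HasDerivAt (fun y : 𝕜 => NormedSpace.exp (-y)) (NormedSpace.exp (-x) * -1) x :=
    _root_.hasDerivAt_exp.comp x (hasDerivAt_neg x)
  refine (hexp.mul (hasDerivAt_egf ha x)).congr_deriv ?_
  rw [egf_succ_sub ha]
  ring

theorem mul_egf_inv_succ (x : 𝕜) :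
    x * egf (fun n => ((n : 𝕜) + 1)⁻¹) x = NormedSpace.exp x - 1 := by
  have hexp := NormedSpace.expSeries_div_hasSum_exp x
  rw [← hexp.tsum_eq, hexp.summable.tsum_eq_zero_add, egf, ← tsum_mul_left]
  simp only [pow_zero, Nat.factorial_zero, Nat.cast_one, div_one, add_sub_cancel_left]
  refine tsum_congr fun n => ?_
  rw [Nat.factorial_succ]
  push_cast
  field_simp
  ring

end ExponentialGeneratingFunction

section ExponentialIntegrals

/-- The entire exponential integral `Ein x = ∫₀ˣ (1 - e⁻ᵗ) / t dt`; the junk value `0` of the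
integrand at `t = 0` is harmless, a point being a null set. -/
noncomputable def expIntegralEin (x : ℝ) : ℝ := ∫ t in 0..x, (1 - exp (-t)) / t

/-- The exponential integral `E₁ x = ∫ₓ^∞ e⁻ᵗ / t dt`, for `x > 0`; the integrand is not
integrable on `(x, ∞)` when `x ≤ 0`. -/
noncomputable def expIntegralE₁ (x : ℝ) : ℝ := ∫ t in Ioi x, exp (-t) / t

theorem hasDerivAt_exp_neg (t : ℝ) : HasDerivAt (fun t => exp (-t)) (-exp (-t)) t := by
  simpa using (hasDerivAt_neg t).exp

theorem mul_dslope_one_sub_exp_neg (t : ℝ) :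
    t * dslope (fun s => 1 - exp (-s)) 0 t = 1 - exp (-t) := by
  simpa using sub_smul_dslope (fun s => 1 - exp (-s)) 0 t

theorem continuous_dslope_one_sub_exp_neg : Continuous (dslope (fun s => 1 - exp (-s)) 0) := by
  rw [← continuousOn_univ, continuousOn_dslope univ_mem]
  exact ⟨by fun_prop, by fun_prop⟩

theorem intervalIntegrable_one_sub_exp_neg_div (x : ℝ) :
    IntervalIntegrable (fun t => (1 - exp (-t)) / t) volume 0 x := by
  refine (continuous_dslope_one_sub_exp_neg.intervalIntegrable 0 x).congr_uIoo fun t ht => ?_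
  have ht₀ : t ≠ 0 := by rintro rfl; exact left_notMem_uIoo ht
  rw [← mul_dslope_one_sub_exp_neg, mul_div_cancel_left₀ _ ht₀]

theorem continuous_one_sub_exp_neg_mul_log : Continuous fun t => (1 - exp (-t)) * log t := by
  have h := continuous_dslope_one_sub_exp_neg.mul continuous_mul_log
  refine h.congr fun t => ?_
  rw [← mul_dslope_one_sub_exp_neg, Pi.mul_apply]
  ring

theorem intervalIntegrable_log_mul_exp_neg (a b : ℝ) :
    IntervalIntegrable (fun t => log t * exp (-t)) volume a b :=
  intervalIntegrable_log'.mul_continuousOn (by fun_prop)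

theorem expIntegralEin_eq_log_sub_integral (x : ℝ) :
    expIntegralEin x = (1 - exp (-x)) * log x - ∫ t in 0..x, log t * exp (-t) := by
  have hlog := intervalIntegrable_log_mul_exp_neg 0 x
  have hein := intervalIntegrable_one_sub_exp_neg_div x
  have hderiv : ∀ t ∈ Ioo (min 0 x) (max 0 x) \ {0}, HasDerivAt (fun t => (1 - exp (-t)) * log t)
      (log t * exp (-t) + (1 - exp (-t)) / t) t := fun t ht =>
    (((hasDerivAt_exp_neg t).const_sub 1).mul (hasDerivAt_log ht.2)).congr_deriv (by ring)
  have hftc := integral_eq_of_hasDerivAt_off_countable _ _ (countable_singleton 0)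
    continuous_one_sub_exp_neg_mul_log.continuousOn hderiv (hlog.add hein)
  rw [integral_add hlog hein] at hftc
  rw [expIntegralEin]
  simp only [log_zero, mul_zero, sub_zero] at hftc
  linarith

theorem integral_log_mul_exp_neg_Ioi_zero :
    ∫ t in Ioi 0, log t * exp (-t) = -eulerMascheroniConstant := by
  have hderiv : HasDerivAt Complex.GammaIntegral (-eulerMascheroniConstant) 1 := by
    refine Complex.hasDerivAt_Gamma_one.congr_of_eventuallyEq ?_
    have hopen : IsOpen {s : ℂ | 0 < s.re} := isOpen_Ioi.preimage Complex.continuous_re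
    filter_upwards [hopen.mem_nhds (by simp : 0 < (1 : ℂ).re)] with s hs
    exact (Complex.Gamma_eq_integral hs).symm
  have hint := (Complex.hasDerivAt_GammaIntegral (s := 1) (by simp)).unique hderiv
  simp only [sub_self, Complex.cpow_zero, one_mul] at hint
  exact_mod_cast hint

theorem integrableOn_log_mul_exp_neg_Ioi_zero :
    IntegrableOn (fun t => log t * exp (-t)) (Ioi 0) := by
  -- The integral of a non-integrable function would be `0`, but here it is `-γ ≠ 0`.
  refine Integrable.of_integral_ne_zero ?_
  rw [integral_log_mul_exp_neg_Ioi_zero]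
  linarith [one_half_lt_eulerMascheroniConstant]

theorem integrableOn_exp_neg_div_Ioi {x : ℝ} (hx : 0 < x) :
    IntegrableOn (fun t => exp (-t) / t) (Ioi x) := by
  refine ((integrableOn_exp_neg_Ioi x).div_const x).mono'
    (by fun_prop : Measurable fun t => exp (-t) / t).aestronglyMeasurable ?_
  filter_upwards [ae_restrict_mem measurableSet_Ioi] with t (ht : x < t)
  have ht₀ : 0 < t := hx.trans ht
  rw [norm_of_nonneg (by positivity)]
  gcongr

theorem tendsto_exp_neg_mul_log_atTop : Tendsto (fun t => exp (-t) * log t) atTop (𝓝 0) := by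
  refine squeeze_zero' ?_ ?_ (tendsto_pow_mul_exp_neg_atTop_nhds_zero 1)
  · filter_upwards [eventually_ge_atTop 1] with t ht
    exact mul_nonneg (exp_pos _).le (log_nonneg ht)
  · filter_upwards [eventually_ge_atTop 0] with t ht
    rw [pow_one, mul_comm]
    gcongr
    exact log_le_self ht

theorem expIntegralE₁_eq_integral_sub_log {x : ℝ} (hx : 0 < x) :
    expIntegralE₁ x = (∫ t in Ioi x, log t * exp (-t)) - exp (-x) * log x := by
  have hlog : IntegrableOn (fun t => log t * exp (-t)) (Ioi x) :=
    integrableOn_log_mul_exp_neg_Ioi_zero.mono_set (Ioi_subset_Ioi hx.le)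
  have hE₁ := integrableOn_exp_neg_div_Ioi hx
  have hderiv : ∀ t ∈ Ici x, HasDerivAt (fun t => exp (-t) * log t)
      (exp (-t) / t - log t * exp (-t)) t := fun t ht =>
    ((hasDerivAt_exp_neg t).mul (hasDerivAt_log (hx.trans_le ht).ne')).congr_deriv (by ring)
  have hftc := integral_Ioi_of_hasDerivAt_of_tendsto' hderiv (hE₁.sub hlog)
    tendsto_exp_neg_mul_log_atTop
  rw [MeasureTheory.integral_sub hE₁ hlog] at hftc
  rw [expIntegralE₁]
  linarith

theorem expIntegralEin_eq_log_add_expIntegralE₁_add_eulerMascheroniConstant {x : ℝ} (hx : 0 < x) :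
    expIntegralEin x = log x + expIntegralE₁ x + eulerMascheroniConstant := by
  have hsplit := integral_interval_add_Ioi integrableOn_log_mul_exp_neg_Ioi_zero
    (integrableOn_log_mul_exp_neg_Ioi_zero.mono_set (Ioi_subset_Ioi hx.le))
  rw [integral_log_mul_exp_neg_Ioi_zero] at hsplit
  rw [expIntegralEin_eq_log_sub_integral, expIntegralE₁_eq_integral_sub_log hx]
  linarith

end ExponentialIntegrals

section Harmonic

theorem harm_zero : harm 0 = 0 := by simp [harm]

theorem harm_succ_sub_harm (n : ℕ) : harm (n + 1) - harm n = ((n : ℝ) + 1)⁻¹ := by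
  simp [harm, Finset.sum_range_succ]

theorem harm_nonneg (n : ℕ) : 0 ≤ harm n := Finset.sum_nonneg fun _ _ => by positivity

theorem harm_le_self (n : ℕ) : harm n ≤ n := by
  have hterm (r : ℕ) : 1 / (r + 1 : ℝ) ≤ 1 := div_le_self zero_le_one (by simp)
  simpa [harm] using Finset.sum_le_card_nsmul (Finset.range n) _ 1 fun r _ => hterm r

theorem norm_harm_le (n : ℕ) : ‖harm n‖ ≤ 1 * 2 ^ n := by
  rw [norm_of_nonneg (harm_nonneg n), one_mul]
  exact (harm_le_self n).trans (mod_cast n.lt_two_pow_self.le)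

theorem he_eq_one_add_egf_harm (x : ℝ) : he x = 1 + egf harm x := by
  rw [he, egf_eq_add_tsum_succ norm_harm_le, harm_zero, zero_add]

theorem hasDerivAt_exp_neg_mul_egf_harm (x : ℝ) :
    HasDerivAt (fun y => exp (-y) * egf harm y)
      (exp (-x) * egf (fun n => ((n : ℝ) + 1)⁻¹) x) x := by
  simpa only [harm_succ_sub_harm, ← exp_eq_exp_ℝ] using hasDerivAt_exp_neg_mul_egf norm_harm_le x

theorem exp_neg_mul_egf_inv_succ {x : ℝ} (hx : x ≠ 0) :
    exp (-x) * egf (fun n => ((n : ℝ) + 1)⁻¹) x = (1 - exp (-x)) / x := by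
  have hmul := mul_egf_inv_succ x
  rw [← exp_eq_exp_ℝ] at hmul
  have hexp : exp (-x) * exp x = 1 := by rw [← exp_add, neg_add_cancel, exp_zero]
  rw [eq_div_iff hx]
  linear_combination exp (-x) * hmul + hexp

theorem exp_neg_mul_egf_harm (x : ℝ) : exp (-x) * egf harm x = expIntegralEin x := by
  have hderiv : ∀ t ∈ Ioo (min 0 x) (max 0 x) \ {0}, HasDerivAt (fun t => exp (-t) * egf harm t)
      ((1 - exp (-t)) / t) t := fun t ht =>
    (hasDerivAt_exp_neg_mul_egf_harm t).congr_deriv (exp_neg_mul_egf_inv_succ ht.2)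
  have hcont : Continuous fun t => exp (-t) * egf harm t :=
    continuous_iff_continuousAt.2 fun t => (hasDerivAt_exp_neg_mul_egf_harm t).continuousAt
  have hftc := integral_eq_of_hasDerivAt_off_countable _ _ (countable_singleton 0)
    hcont.continuousOn hderiv (intervalIntegrable_one_sub_exp_neg_div x)
  rw [expIntegralEin, hftc, egf_zero, harm_zero, mul_zero, sub_zero]

theorem he_eq_one_add_exp_mul_expIntegralEin (x : ℝ) :
    he x = 1 + exp x * expIntegralEin x := by
  rw [he_eq_one_add_egf_harm, ← exp_neg_mul_egf_harm, ← mul_assoc, ← exp_add, add_neg_cancel,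
    exp_zero, one_mul]

end Harmonic

/-- Gosper's generating function: for `x > 0`,
`ₕe(x) = 1 + e^x (ln x + E₁(x) + γ)` where `E₁(x) = ∫_x^∞ e^{-t}/t dt`. -/
theorem he_gosper (x : ℝ) (hx : 0 < x) :
    he x = 1 + Real.exp x *
      (Real.log x + (∫ t in Set.Ioi x, Real.exp (-t) / t) +
        Real.eulerMascheroniConstant) := by
  rw [he_eq_one_add_exp_mul_expIntegralEin,
    expIntegralEin_eq_log_add_expIntegralE₁_add_eulerMascheroniConstant hx, expIntegralE₁]
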